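/- arXiv:2602.22509 — 2 statements merged into one kernel-verified Lean document; each statement's English description precedes it below -/
import Mathlib

section
/- Let G be the Green's function of (1 − Δ) on the 4-dimensional torus 𝕋⁴, i.e. the distributional solution of (1 − Δ)G = δ₀. Then G is continuous and strictly positive on 𝕋⁴ \ {0}, and sup_{x ∈ 𝕋⁴\{0}} | G(x) − 1/(4π²|x|²) − (1/(8π²)) log |x| | < ∞. -/
open MeasureTheory Real

noncomputable section

/-- The Euclidean norm on `Fin 4 → ℝ` (we work with periodic functions on `ℝ⁴`
representing functions on the torus `𝕋⁴ = (ℝ/2πℤ)⁴`). -/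
def enorm4 (x : Fin 4 → ℝ) : ℝ := Real.sqrt (∑ i, (x i) ^ 2)

/-- A point of the lattice `(2πℤ)⁴`. -/
def lpt (k : Fin 4 → ℤ) : Fin 4 → ℝ := fun i => 2 * Real.pi * (k i)

/-- Geodesic distance of (the torus point represented by) `x` to `0`,
i.e. the Euclidean distance of `x` to the lattice `(2πℤ)⁴`. -/
def latDist (x : Fin 4 → ℝ) : ℝ := ⨅ k : Fin 4 → ℤ, enorm4 (x - lpt k)

/-- The set of points representing `𝕋⁴ \ {0}`. -/
def Sreg : Set (Fin 4 → ℝ) := {x | ∀ k : Fin 4 → ℤ, x ≠ lpt k}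

/-- A fundamental domain `(-π, π]⁴` for the torus. -/
def FD : Set (Fin 4 → ℝ) := {x | ∀ i, x i ∈ Set.Ioc (-Real.pi) Real.pi}

/-- `(2πℤ)⁴`-periodicity, i.e. `f` represents a function on `𝕋⁴`. -/
def Per (f : (Fin 4 → ℝ) → ℝ) : Prop :=
  ∀ (x : Fin 4 → ℝ) (k : Fin 4 → ℤ), f (x + lpt k) = f x

/-- The Laplacian of `φ`. -/
def lap (φ : (Fin 4 → ℝ) → ℝ) (x : Fin 4 → ℝ) : ℝ :=
  ∑ i, fderiv ℝ (fun y => fderiv ℝ φ y (Pi.single i 1)) x (Pi.single i 1)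


/-! ### The free kernel -/

/-- Integrand of the heat-kernel representation. -/
def kI (s t : ℝ) : ℝ := Real.exp (-t) / t ^ 2 * Real.exp (-(s / (4 * t)))

/-- The kernel of `(1-Δ)⁻¹` on `ℝ⁴` as a function of `|x|²`. -/
def Kf (s : ℝ) : ℝ := (1 / (16 * Real.pi ^ 2)) * ∫ t in Set.Ioi (0:ℝ), kI s t

lemma kI_nonneg (s t : ℝ) : 0 ≤ kI s t := by unfold kI; positivity

lemma kI_le {s t : ℝ} (hs : 0 < s) (ht : 0 < t) :
    kI s t ≤ 6144 / s ^ 4 * (Real.exp (-t) * t ^ 2) := by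
  unfold kI
  have h := Real.pow_div_factorial_le_exp (s / (4 * t)) (by positivity) 4
  have h2 : Real.exp (-(s / (4 * t))) ≤ 6144 * t ^ 4 / s ^ 4 := by
    rw [Real.exp_neg, inv_le_comm₀ (Real.exp_pos _) (by positivity)]
    refine le_trans (le_of_eq ?_) h
    simp [Nat.factorial]
    field_simp
    norm_num
  calc Real.exp (-t) / t ^ 2 * Real.exp (-(s / (4 * t)))
      ≤ Real.exp (-t) / t ^ 2 * (6144 * t ^ 4 / s ^ 4) := by gcongr
    _ = _ := by field_simp

lemma int_gam : IntegrableOn (fun t : ℝ => Real.exp (-t) * t ^ 2) (Set.Ioi 0) := by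
  have := Real.GammaIntegral_convergent (s := 3) (by norm_num)
  refine this.congr_fun (fun t _ => ?_) measurableSet_Ioi
  norm_num

lemma kI_meas (s : ℝ) : Measurable (kI s) := by unfold kI; fun_prop

lemma int_kI {s : ℝ} (hs : 0 < s) : IntegrableOn (kI s) (Set.Ioi 0) := by
  refine Integrable.mono' (int_gam.const_mul (6144 / s ^ 4)) (kI_meas s).aestronglyMeasurable ?_
  filter_upwards [self_mem_ae_restrict measurableSet_Ioi] with t ht
  rw [Real.norm_of_nonneg (kI_nonneg _ _)]
  exact kI_le hs ht

lemma Kf_nonneg (s : ℝ) : 0 ≤ Kf s := by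
  unfold Kf
  have : 0 ≤ ∫ t in Set.Ioi (0:ℝ), kI s t := integral_nonneg fun t => kI_nonneg s t
  positivity

lemma Kf_pos {s : ℝ} (hs : 0 < s) : 0 < Kf s := by
  unfold Kf
  have : 0 < ∫ t in Set.Ioi (0:ℝ), kI s t := by
    rw [setIntegral_pos_iff_support_of_nonneg_ae
      (Filter.Eventually.of_forall fun t => kI_nonneg s t) (int_kI hs)]
    have : Set.Ioi (0:ℝ) ⊆ Function.support (kI s) ∩ Set.Ioi 0 := by
      intro t ht
      refine ⟨?_, ht⟩
      have : 0 < t := ht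
      simp only [Function.mem_support, kI]
      positivity
    refine lt_of_lt_of_le ?_ (measure_mono this)
    simp
  positivity

lemma Kf_decay : ∃ C : ℝ, 0 < C ∧ ∀ s, 0 < s → Kf s ≤ C / s ^ 4 := by
  refine ⟨(1 / (16 * Real.pi ^ 2)) * 6144 * (∫ t in Set.Ioi (0:ℝ), Real.exp (-t) * t ^ 2) + 1,
    ?_, ?_⟩
  · have : 0 ≤ ∫ t in Set.Ioi (0:ℝ), Real.exp (-t) * t ^ 2 :=
      integral_nonneg fun t => by positivity
    positivity
  · intro s hs
    unfold Kf
    have h : ∫ t in Set.Ioi (0:ℝ), kI s t ≤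
        ∫ t in Set.Ioi (0:ℝ), 6144 / s ^ 4 * (Real.exp (-t) * t ^ 2) :=
      setIntegral_mono_on (int_kI hs) (int_gam.const_mul _) measurableSet_Ioi
        (fun t ht => kI_le hs ht)
    rw [integral_const_mul] at h
    calc _ ≤ (1 / (16 * Real.pi ^ 2)) *
          (6144 / s ^ 4 * ∫ t in Set.Ioi (0:ℝ), Real.exp (-t) * t ^ 2) := by gcongr
      _ ≤ (1 / (16 * Real.pi ^ 2)) *
          (6144 / s ^ 4 * ∫ t in Set.Ioi (0:ℝ), Real.exp (-t) * t ^ 2) + 1 / s ^ 4 := by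
            have : 0 ≤ 1 / s ^ 4 := by positivity
            linarith
      _ = _ := by ring

lemma Kf_cont : ContinuousOn Kf (Set.Ioi 0) := by
  unfold Kf
  refine ContinuousOn.mul continuousOn_const ?_
  intro s0 hs0
  have hs0 : 0 < s0 := hs0
  have : ContinuousOn (fun s => ∫ t in Set.Ioi (0:ℝ), kI s t) (Set.Ioi (s0 / 2)) := by
    refine continuousOn_of_dominated (bound := kI (s0 / 2))
      (fun s _ => (kI_meas s).aestronglyMeasurable) ?_ (int_kI (by positivity)) ?_
    · intro s hs
      filter_upwards [self_mem_ae_restrict measurableSet_Ioi] with t ht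
      have ht : 0 < t := ht
      have hs : s0 / 2 < s := hs
      rw [Real.norm_of_nonneg (kI_nonneg _ _)]
      unfold kI
      gcongr
    · refine Filter.Eventually.of_forall fun t => ?_
      unfold kI
      fun_prop
  exact (this.continuousAt (Ioi_mem_nhds (by linarith))).continuousWithinAt

/-- `∫₀^∞ t⁻² e^{-s/4t} dt = 4/s`. -/
lemma int_f0 {s : ℝ} (hs : 0 < s) :
    IntegrableOn (fun t : ℝ => 1 / t ^ 2 * Real.exp (-(s / (4 * t)))) (Set.Ioi 0) ∧
    ∫ t in Set.Ioi (0:ℝ), 1 / t ^ 2 * Real.exp (-(s / (4 * t))) = 4 / s := by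
  let F : ℝ → ℝ := fun t => if t ≤ 0 then 0 else 4 / s * Real.exp (-(s / (4 * t)))
  have hF0 : F 0 = 0 := by simp [F]
  have hFe : ∀ t : ℝ, 0 < t → F =ᶠ[nhds t] fun t => 4 / s * Real.exp (-(s / (4 * t))) := by
    intro t ht
    filter_upwards [Ioi_mem_nhds ht] with u hu
    have : ¬ u ≤ 0 := not_le.mpr hu
    simp [F, this]
  have hc : ContinuousWithinAt F (Set.Ici 0) 0 := by
    rw [← continuousWithinAt_Ioi_iff_Ici]
    unfold ContinuousWithinAt
    rw [hF0]
    have h1 : Filter.Tendsto (fun t : ℝ => 4 / s * Real.exp (-(s / (4 * t))))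
        (nhdsWithin 0 (Set.Ioi 0)) (nhds 0) := by
      have h2 : Filter.Tendsto (fun t : ℝ => (s / 4) * t⁻¹)
        (nhdsWithin 0 (Set.Ioi 0)) Filter.atTop :=
          Filter.Tendsto.const_mul_atTop (by positivity) tendsto_inv_nhdsGT_zero
      have h3 := (Real.tendsto_exp_neg_atTop_nhds_zero.comp h2).const_mul (4 / s)
      rw [mul_zero] at h3
      refine h3.congr fun t => ?_
      simp only [Function.comp]
      congr 3
      rw [div_mul_eq_div_mul_one_div s 4 t]; simp
    refine h1.congr' ?_
    filter_upwards [self_mem_nhdsWithin] with t ht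
    exact (hFe t ht).self_of_nhds.symm
  have hd : ∀ t ∈ Set.Ioi (0:ℝ), HasDerivAt F (1 / t ^ 2 * Real.exp (-(s / (4 * t)))) t := by
    intro t ht
    have ht : 0 < t := ht
    have h1 : HasDerivAt (fun t : ℝ => -(s / (4 * t))) (s / (4 * t ^ 2)) t := by
      have := ((hasDerivAt_inv ht.ne').const_mul (-(s / 4)))
      refine (this.congr_of_eventuallyEq (Filter.Eventually.of_forall fun u => ?_)).congr_deriv ?_
      · simp only; rw [div_mul_eq_div_mul_one_div s 4 u]; simp
      · field_simp
    refine ((h1.exp.const_mul (4 / s)).congr_of_eventuallyEq (hFe t ht)).congr_deriv ?_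
    field_simp
  have hp : ∀ t ∈ Set.Ioi (0:ℝ), 0 ≤ 1 / t ^ 2 * Real.exp (-(s / (4 * t))) := by
    intro t _; positivity
  have hl : Filter.Tendsto F Filter.atTop (nhds (4 / s)) := by
    have h2 : Filter.Tendsto (fun t : ℝ => -((s / 4) * t⁻¹)) Filter.atTop (nhds 0) := by
      simpa using (tendsto_inv_atTop_zero.const_mul (s / 4)).neg
    have h3 := ((Real.continuous_exp.tendsto 0).comp h2).const_mul (4 / s)
    rw [Real.exp_zero, mul_one] at h3
    refine h3.congr' ?_
    filter_upwards [Filter.eventually_gt_atTop 0] with t ht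
    rw [(hFe t ht).self_of_nhds]
    simp only [Function.comp]
    congr 3
    rw [div_mul_eq_div_mul_one_div s 4 t]; simp
  refine ⟨integrableOn_Ioi_deriv_of_nonneg hc hd hp hl, ?_⟩
  rw [integral_Ioi_of_hasDerivAt_of_nonneg hc hd hp hl, hF0, sub_zero]

/-- The difference `t⁻² e^{-s/4t} - e^{-t} t⁻² e^{-s/4t}`. -/
def dI (s t : ℝ) : ℝ := (1 - Real.exp (-t)) / t ^ 2 * Real.exp (-(s / (4 * t)))

lemma int_dI {s : ℝ} (hs : 0 < s) : IntegrableOn (dI s) (Set.Ioi 0) := by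
  refine ((int_f0 hs).1.sub (int_kI hs)).congr_fun (fun t _ => ?_) measurableSet_Ioi
  simp only [Pi.sub_apply, kI, dI]; ring

lemma kI_eq {s : ℝ} (hs : 0 < s) :
    ∫ t in Set.Ioi (0:ℝ), kI s t = 4 / s - ∫ t in Set.Ioi (0:ℝ), dI s t := by
  rw [← (int_f0 hs).2, ← integral_sub (int_f0 hs).1 (int_dI hs)]
  refine setIntegral_congr_fun measurableSet_Ioi fun t _ => ?_
  simp only [kI, dI]; ring

lemma exp_small {u : ℝ} (hu : 0 < u) : Real.exp (-u) ≤ 1 / u := by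
  rw [Real.exp_neg, ← one_div]
  gcongr
  linarith [Real.add_one_le_exp u]

lemma exp_quad {t : ℝ} (ht : 0 ≤ t) : Real.exp (-t) ≤ 1 - t + t ^ 2 / 2 := by
  have h := Real.quadratic_le_exp_of_nonneg ht
  rw [Real.exp_neg, inv_le_comm₀ (Real.exp_pos _) (by nlinarith [sq_nonneg (t - 1)])]
  refine le_trans ?_ h
  rw [inv_le_iff_one_le_mul₀ (by nlinarith [sq_nonneg (t - 1)])]
  nlinarith [sq_nonneg (t ^ 2)]

lemma dI_bound {s : ℝ} (hs : 0 < s) (hs1 : s ≤ 1) :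
    |(∫ t in Set.Ioi (0:ℝ), dI s t) + Real.log s| ≤ 5 := by
  have hI := int_dI hs
  have hI1 : IntegrableOn (dI s) (Set.Ioc 0 s) := hI.mono_set fun t ht => ht.1
  have hI2 : IntegrableOn (dI s) (Set.Ioc s 1) := hI.mono_set fun t ht => hs.trans ht.1
  have hI3 : IntegrableOn (dI s) (Set.Ioi 1) :=
    hI.mono_set fun t (ht : 1 < t) => (zero_lt_one.trans ht : 0 < t)
  have hsplit : ∫ t in Set.Ioi (0:ℝ), dI s t =
      (∫ t in Set.Ioc 0 s, dI s t) + (∫ t in Set.Ioc s 1, dI s t) +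
        ∫ t in Set.Ioi 1, dI s t := by
    have d1 : Disjoint (Set.Ioc s 1) (Set.Ioi 1) :=
      Set.disjoint_left.mpr fun t ht ht' => absurd ht.2 (not_le.mpr ht')
    have d2 : Disjoint (Set.Ioc 0 s) (Set.Ioi s) :=
      Set.disjoint_left.mpr fun t ht ht' => absurd ht.2 (not_le.mpr ht')
    rw [add_assoc, ← setIntegral_union d1 measurableSet_Ioi hI2 hI3,
      Set.Ioc_union_Ioi_eq_Ioi hs1, ← setIntegral_union d2 measurableSet_Ioi hI1
      (hI.mono_set (Set.Ioi_subset_Ioi hs.le)),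
      Set.Ioc_union_Ioi_eq_Ioi hs.le]
  have hnn : ∀ t, 0 < t → 0 ≤ dI s t := by
    intro t ht
    have : Real.exp (-t) ≤ 1 := Real.exp_le_one_iff.mpr (by linarith)
    unfold dI
    have : 0 ≤ 1 - Real.exp (-t) := by linarith
    positivity
  have h1e : ∀ t : ℝ, 1 - Real.exp (-t) ≤ t := fun t => by
    linarith [Real.add_one_le_exp (-t)]
  have a1 : 0 ≤ ∫ t in Set.Ioc 0 s, dI s t :=
    setIntegral_nonneg measurableSet_Ioc fun t ht => hnn t ht.1
  have a3 : 0 ≤ ∫ t in Set.Ioi 1, dI s t :=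
    setIntegral_nonneg measurableSet_Ioi fun t ht => hnn t (zero_lt_one.trans ht)
  have b1 : ∫ t in Set.Ioc 0 s, dI s t ≤ 4 := by
    have : ∫ t in Set.Ioc 0 s, dI s t ≤ ∫ t in Set.Ioc 0 s, 4 / s := by
      refine setIntegral_mono_on hI1 (integrableOn_const (by simp)) measurableSet_Ioc ?_
      intro t ht
      have ht0 := ht.1
      unfold dI
      calc _ ≤ t / t ^ 2 * (1 / (s / (4 * t))) := by
            have := exp_small (u := s / (4 * t)) (by positivity)
            gcongr
            exact h1e t
        _ = 4 / s := by field_simp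
    refine this.trans (le_of_eq ?_)
    rw [setIntegral_const]
    simp [hs.le]
    field_simp
  have hsq : IntegrableOn (fun t : ℝ => t ^ (-2:ℝ)) (Set.Ioi 1) :=
    integrableOn_Ioi_rpow_of_lt (by norm_num) (by norm_num)
  have b3 : ∫ t in Set.Ioi 1, dI s t ≤ 1 := by
    have : ∫ t in Set.Ioi 1, dI s t ≤ ∫ t in Set.Ioi (1:ℝ), t ^ (-2:ℝ) := by
      refine setIntegral_mono_on hI3 hsq measurableSet_Ioi ?_
      intro t ht
      have ht0 : 0 < t := zero_lt_one.trans ht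
      unfold dI
      have e : t ^ (-2:ℝ) = 1 / t ^ 2 * 1 := by
        rw [Real.rpow_neg ht0.le]; norm_num
      rw [e]
      have : Real.exp (-(s / (4 * t))) ≤ 1 :=
        Real.exp_le_one_iff.mpr (by simp; positivity)
      gcongr
      linarith [Real.exp_pos (-t)]
    rw [integral_Ioi_rpow_of_lt (by norm_num) (by norm_num)] at this
    norm_num at this
    exact this
  have c1 : IntervalIntegrable (fun t : ℝ => 1 / t) volume s 1 := by
    apply ContinuousOn.intervalIntegrable
    rw [Set.uIcc_of_le hs1]
    exact continuousOn_const.div continuousOn_id fun t ht => (hs.trans_le ht.1).ne'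
  have c2 : IntervalIntegrable (fun t : ℝ => 1 / t - 1 / 2 - s / 4 * t ^ (-2:ℤ)) volume s 1 := by
    apply ContinuousOn.intervalIntegrable
    rw [Set.uIcc_of_le hs1]
    refine ContinuousOn.sub (ContinuousOn.sub (continuousOn_const.div continuousOn_id
      fun t ht => (hs.trans_le ht.1).ne') continuousOn_const) (continuousOn_const.mul ?_)
    exact continuousOn_id.zpow₀ _ fun t ht => Or.inl (hs.trans_le ht.1).ne'
  have c3 : IntervalIntegrable (fun t : ℝ => s / 4 * t ^ (-2:ℤ)) volume s 1 := by
    apply ContinuousOn.intervalIntegrable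
    rw [Set.uIcc_of_le hs1]
    refine (continuousOn_const.mul ?_)
    exact continuousOn_id.zpow₀ _ fun t ht => Or.inl (hs.trans_le ht.1).ne'
  have i1 : ∫ t in s..1, 1 / t = - Real.log s := by
    rw [integral_one_div_of_pos hs one_pos]
    simp
  have i2 : ∫ t in s..1, (1 / t - 1 / 2 - s / 4 * t ^ (-2:ℤ)) =
      - Real.log s - (1 - s) / 2 - (1 - s) / 4 := by
    rw [intervalIntegral.integral_sub (c1.sub intervalIntegrable_const) c3,
      intervalIntegral.integral_sub c1 intervalIntegrable_const, i1,
      intervalIntegral.integral_const, intervalIntegral.integral_const_mul,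
      integral_zpow (Or.inr ⟨by norm_num, by
        rw [Set.uIcc_of_le hs1]; exact fun h => absurd h.1 (not_le.mpr hs)⟩)]
    norm_num [zpow_neg]
    field_simp
    ring
  have b2 : ∫ t in Set.Ioc s 1, dI s t ≤ - Real.log s := by
    rw [← i1, intervalIntegral.integral_of_le hs1]
    refine setIntegral_mono_on hI2 c1.1 measurableSet_Ioc ?_
    intro t ht
    have ht0 : 0 < t := hs.trans ht.1
    unfold dI
    have : Real.exp (-(s / (4 * t))) ≤ 1 :=
      Real.exp_le_one_iff.mpr (by simp; positivity)
    calc _ ≤ t / t ^ 2 * 1 := by gcongr; exact h1e t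
      _ = 1 / t := by field_simp
  have a2 : - Real.log s - (1 - s) / 2 - (1 - s) / 4 ≤ ∫ t in Set.Ioc s 1, dI s t := by
    rw [← i2, intervalIntegral.integral_of_le hs1]
    refine setIntegral_mono_on c2.1 hI2 measurableSet_Ioc ?_
    intro t ht
    have ht0 : 0 < t := hs.trans ht.1
    have hq := exp_quad ht0.le
    have e1 : 1 - s / (4 * t) ≤ Real.exp (-(s / (4 * t))) := by
      linarith [Real.add_one_le_exp (-(s / (4 * t)))]
    have e2 : 0 ≤ 1 - s / (4 * t) := by
      rw [sub_nonneg, div_le_one (by positivity)]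
      linarith [ht.1]
    unfold dI
    calc _ ≤ (t - t ^ 2 / 2) / t ^ 2 * (1 - s / (4 * t)) := by
          have e3 : (t - t ^ 2 / 2) / t ^ 2 * (1 - s / (4 * t)) -
            (1 / t - 1 / 2 - s / 4 * t ^ (-2:ℤ)) = s / (8 * t) := by
              rw [zpow_neg]
              norm_cast
              field_simp
              ring
          have : 0 ≤ s / (8 * t) := by positivity
          linarith
      _ ≤ _ := by
          have ht1 := ht.2
          have : 0 ≤ t - t ^ 2 / 2 := by nlinarith
          have h5 : 0 ≤ (1 - Real.exp (-t)) := by linarith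
          have h6 : t - t ^ 2 / 2 ≤ 1 - Real.exp (-t) := by linarith
          exact mul_le_mul (div_le_div_of_nonneg_right h6 (by positivity)) e1 e2 (by positivity)
  rw [hsplit, abs_le]
  constructor <;> linarith

/-- Asymptotics of the kernel on bounded sets. -/
lemma Kf_asymp : ∃ C : ℝ, ∀ s, 0 < s → s ≤ 100 →
    |Kf s - 1 / (4 * Real.pi ^ 2 * s) - 1 / (16 * Real.pi ^ 2) * Real.log s| ≤ C := by
  obtain ⟨C, hC, hd⟩ := Kf_decay
  refine ⟨5 + C + 1 + 100, fun s hs hs1 => ?_⟩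
  have hpi : 1 ≤ Real.pi ^ 2 := by nlinarith [Real.pi_gt_three]
  have hle : 1 / (16 * Real.pi ^ 2) ≤ 1 := by
    rw [div_le_one (by positivity)]; linarith
  rcases le_or_gt s 1 with h | h
  · have hb := dI_bound hs h
    have e : Kf s - 1 / (4 * Real.pi ^ 2 * s) - 1 / (16 * Real.pi ^ 2) * Real.log s =
      - (1 / (16 * Real.pi ^ 2) * ((∫ t in Set.Ioi (0:ℝ), dI s t) + Real.log s)) := by
      unfold Kf
      rw [kI_eq hs]
      field_simp
      ring
    rw [e, abs_neg, abs_mul, abs_of_nonneg (by positivity)]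
    nlinarith [abs_nonneg ((∫ t in Set.Ioi (0:ℝ), dI s t) + Real.log s)]
  · have h1 : Kf s ≤ C := (hd s hs).trans (div_le_self hC.le (one_le_pow₀ h.le))
    have h0 := Kf_nonneg s
    have h2 : 1 / (4 * Real.pi ^ 2 * s) ≤ 1 := by
      rw [div_le_one (by positivity)]; nlinarith
    have h3 : 0 ≤ 1 / (4 * Real.pi ^ 2 * s) := by positivity
    have h4 : 0 ≤ Real.log s := Real.log_nonneg h.le
    have h5 : Real.log s ≤ 100 := (Real.log_le_self hs.le).trans hs1
    have h6 : 1 / (16 * Real.pi ^ 2) * Real.log s ≤ 100 := by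
      calc _ ≤ 1 * Real.log s := by gcongr
        _ ≤ 100 := by linarith
    have h7 : 0 ≤ 1 / (16 * Real.pi ^ 2) * Real.log s := by positivity
    rw [abs_le]
    constructor <;> linarith

/-! ### Fourier uniqueness -/

/-- The squared Euclidean norm. -/
def q4 (x : Fin 4 → ℝ) : ℝ := ∑ i, (x i) ^ 2

/-- The characters. -/
def ee (n : Fin 4 → ℤ) (x : Fin 4 → ℝ) : ℂ := Complex.exp (Complex.I * ∑ i, (n i : ℂ) * (x i : ℂ))

lemma ee_cont (n : Fin 4 → ℤ) : Continuous (ee n) := by unfold ee; fun_prop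

lemma ee_norm (n : Fin 4 → ℤ) (x : Fin 4 → ℝ) : ‖ee n x‖ = 1 := by
  unfold ee
  rw [Complex.norm_exp]
  simp

/-- Projection to the torus. -/
def tproj (x : Fin 4 → ℝ) : UnitAddTorus (Fin 4) :=
  fun i => ((x i / (2 * Real.pi) : ℝ) : UnitAddCircle)

/-- The section of the projection. -/
def tsec (y : UnitAddTorus (Fin 4)) : Fin 4 → ℝ :=
  fun i => Complex.arg (AddCircle.toCircle (y i) : ℂ)

lemma tproj_cont : Continuous tproj := by
  unfold tproj
  refine continuous_pi fun i => ?_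
  exact (AddCircle.continuous_mk' 1).comp (by fun_prop)

lemma tsec_meas : Measurable tsec := by
  unfold tsec
  refine measurable_pi_lambda _ fun i => ?_
  refine Complex.measurable_arg.comp ?_
  have : Continuous fun y : UnitAddTorus (Fin 4) => (AddCircle.toCircle (y i) : ℂ) :=
    continuous_subtype_val.comp (AddCircle.continuous_toCircle.comp (continuous_apply i))
  exact this.measurable

lemma tsec_tproj {x : Fin 4 → ℝ} (hx : x ∈ FD) : tsec (tproj x) = x := by
  funext i
  simp only [tsec, tproj, AddCircle.toCircle_apply_mk, Circle.coe_exp]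
  have : 2 * Real.pi / 1 * (x i / (2 * Real.pi)) = x i := by field_simp
  rw [this, Complex.arg_exp_mul_I, toIocMod_eq_self]
  have h2 : -Real.pi + 2 * Real.pi = Real.pi := by ring
  rw [h2]
  exact hx i

lemma mF_tproj (n : Fin 4 → ℤ) (x : Fin 4 → ℝ) : UnitAddTorus.mFourier n (tproj x) = ee n x := by
  simp only [UnitAddTorus.mFourier, ContinuousMap.coe_mk, tproj, fourier_coe_apply, ee]
  rw [← Complex.exp_sum]
  congr 1
  rw [Finset.mul_sum]
  refine Finset.sum_congr rfl fun i _ => ?_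
  have : (Real.pi : ℂ) ≠ 0 := by exact_mod_cast Real.pi_ne_zero
  push_cast
  field_simp

lemma FD_meas : MeasurableSet FD := by
  have : FD = Set.univ.pi fun _ => Set.Ioc (-Real.pi) Real.pi := by
    ext x; simp [FD]
  rw [this]
  exact MeasurableSet.univ_pi fun _ => measurableSet_Ioc

lemma int_mul_bdd {h : (Fin 4 → ℝ) → ℝ} {μ : Measure (Fin 4 → ℝ)} (hh : Integrable h μ)
    (f : C(UnitAddTorus (Fin 4), ℂ)) : Integrable (fun x => (h x : ℂ) * f (tproj x)) μ := by
  refine Integrable.mul_bdd (c := ‖f‖) hh.ofReal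
    (f.continuous.comp tproj_cont).aestronglyMeasurable ?_
  exact Filter.Eventually.of_forall fun x => f.norm_coe_le_norm _

lemma uniq_step1 {h : (Fin 4 → ℝ) → ℝ} (hh : IntegrableOn h FD)
    (h0 : ∀ n, ∫ x in FD, (h x : ℂ) * ee n x = 0) (f : C(UnitAddTorus (Fin 4), ℂ)) :
    ∫ x in FD, (h x : ℂ) * f (tproj x) = 0 := by
  have hspan : ∀ p ∈ Submodule.span ℂ (Set.range (UnitAddTorus.mFourier (d := Fin 4))),
      ∫ x in FD, (h x : ℂ) * p (tproj x) = 0 := by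
    intro p hp
    induction hp using Submodule.span_induction with
    | mem p hp =>
      obtain ⟨n, rfl⟩ := hp
      simp_rw [mF_tproj]; exact h0 n
    | zero => simp
    | add p r _ _ hp hr =>
      simp only [ContinuousMap.add_apply, mul_add]
      rw [integral_add (int_mul_bdd hh p) (int_mul_bdd hh r), hp, hr, add_zero]
    | smul c p _ hp =>
      have : ∀ x, (h x : ℂ) * (c • p) (tproj x) = c * ((h x : ℂ) * p (tproj x)) := by
        intro x; simp; ring
      simp_rw [this]
      rw [integral_const_mul, hp, mul_zero]
  have hf : f ∈ (Submodule.span ℂ (Set.range (UnitAddTorus.mFourier (d := Fin 4)))).topologicalClosure := by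
    rw [UnitAddTorus.span_mFourier_closure_eq_top]; trivial
  rw [← SetLike.mem_coe, Submodule.topologicalClosure_coe, Metric.mem_closure_iff] at hf
  by_contra hne
  set M := ∫ x in FD, ‖h x‖
  have hM : 0 ≤ M := integral_nonneg fun x => norm_nonneg _
  have hpos : 0 < ‖∫ x in FD, (h x : ℂ) * f (tproj x)‖ := norm_pos_iff.mpr hne
  obtain ⟨p, hp, hd⟩ := hf (‖∫ x in FD, (h x : ℂ) * f (tproj x)‖ / (M + 1)) (by positivity)
  have hb : ‖∫ x in FD, (h x : ℂ) * f (tproj x)‖ ≤ M * dist f p := by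
    calc _ = ‖∫ x in FD, (h x : ℂ) * (f - p) (tproj x)‖ := by
          simp only [ContinuousMap.sub_apply, mul_sub]
          rw [integral_sub (int_mul_bdd hh f) (int_mul_bdd hh p), hspan p hp, sub_zero]
      _ ≤ ∫ x in FD, ‖(h x : ℂ) * (f - p) (tproj x)‖ := norm_integral_le_integral_norm _
      _ ≤ ∫ x in FD, ‖h x‖ * dist f p := by
          refine integral_mono (int_mul_bdd hh (f - p)).norm (hh.norm.mul_const _) fun x => ?_
          simp only [norm_mul, Complex.norm_real]
          rw [dist_eq_norm]
          gcongr
          exact (f - p).norm_coe_le_norm _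
      _ = _ := integral_mul_const _ _
  rw [lt_div_iff₀ (by positivity)] at hd
  nlinarith [dist_nonneg (x := f) (y := p)]

lemma uniq {h : (Fin 4 → ℝ) → ℝ} (hh : IntegrableOn h FD)
    (h0 : ∀ n, ∫ x in FD, (h x : ℂ) * ee n x = 0) : h =ᵐ[volume.restrict FD] 0 := by
  set μ := (volume : Measure (Fin 4 → ℝ)).restrict FD with hμ
  have hh' : Integrable h μ := hh
  have hm : AEMeasurable h μ := hh'.aemeasurable
  have m1 : AEMeasurable (fun x => ENNReal.ofReal (h x)) μ := hm.ennreal_ofReal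
  have m2 : AEMeasurable (fun x => ENNReal.ofReal (- h x)) μ := hm.neg.ennreal_ofReal
  have f1 : ∫⁻ x, ENNReal.ofReal (h x) ∂μ ≠ ⊤ := hh'.lintegral_lt_top.ne
  have f2 : ∫⁻ x, ENNReal.ofReal (- h x) ∂μ ≠ ⊤ := hh'.neg.lintegral_lt_top.ne
  set ν1 := μ.withDensity (fun x => ENNReal.ofReal (h x)) with hν1
  set ν2 := μ.withDensity (fun x => ENNReal.ofReal (- h x)) with hν2
  have : IsFiniteMeasure ν1 := isFiniteMeasure_withDensity f1
  have : IsFiniteMeasure ν2 := isFiniteMeasure_withDensity f2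
  have key : ν1.map tproj = ν2.map tproj := by
    refine ext_of_forall_integral_eq_of_IsFiniteMeasure fun f => ?_
    rw [integral_map tproj_cont.aemeasurable f.continuous.aestronglyMeasurable,
      integral_map tproj_cont.aemeasurable f.continuous.aestronglyMeasurable,
      integral_withDensity_eq_integral_toReal_smul₀ m1 (by simp),
      integral_withDensity_eq_integral_toReal_smul₀ m2 (by simp), ← sub_eq_zero]
    have hfb : ∀ᵐ x ∂μ, ‖f (tproj x)‖ ≤ ‖f‖ :=
      Filter.Eventually.of_forall fun x => f.norm_coe_le_norm _
    have hfm : AEStronglyMeasurable (fun x => f (tproj x)) μ :=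
      (f.continuous.comp tproj_cont).aestronglyMeasurable
    have i1 : Integrable (fun x => (ENNReal.ofReal (h x)).toReal • f (tproj x)) μ :=
      Integrable.mul_bdd (integrable_toReal_of_lintegral_ne_top m1 f1) hfm hfb
    have i2 : Integrable (fun x => (ENNReal.ofReal (- h x)).toReal • f (tproj x)) μ :=
      Integrable.mul_bdd (integrable_toReal_of_lintegral_ne_top m2 f2) hfm hfb
    rw [← integral_sub i1 i2]
    let F : C(UnitAddTorus (Fin 4), ℂ) := ⟨fun y => (f y : ℂ), by fun_prop⟩
    have h1 := uniq_step1 hh h0 F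
    have h2 : ∫ x in FD, (h x : ℂ) * F (tproj x) = ((∫ x in FD, h x * f (tproj x) : ℝ) : ℂ) := by
      rw [← integral_complex_ofReal]
      refine integral_congr_ae (Filter.Eventually.of_forall fun x => ?_)
      simp [F]
    rw [h2] at h1
    have h3 : ∫ x in FD, h x * f (tproj x) = 0 := by exact_mod_cast h1
    rw [← h3]
    refine integral_congr_ae (Filter.Eventually.of_forall fun x => ?_)
    simp only [smul_eq_mul, ENNReal.toReal_ofReal']
    rcases le_total 0 (h x) with hx | hx
    · rw [max_eq_left hx, max_eq_right (by linarith)]; ring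
    · rw [max_eq_right hx, max_eq_left (by linarith)]; ring
  have back : ∀ ν : Measure (Fin 4 → ℝ), ν ≪ μ → (ν.map tproj).map tsec = ν := by
    intro ν hν
    rw [Measure.map_map tsec_meas tproj_cont.measurable]
    have : (tsec ∘ tproj) =ᵐ[ν] id := by
      apply hν.ae_le
      filter_upwards [self_mem_ae_restrict FD_meas] with x hx
      exact tsec_tproj hx
    rw [Measure.map_congr this, Measure.map_id]
  have heq : ν1 = ν2 := by
    rw [← back ν1 (withDensity_absolutelyContinuous _ _), key,
      back ν2 (withDensity_absolutelyContinuous _ _)]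
  rw [hν1, hν2, withDensity_eq_iff m1 m2 f1] at heq
  filter_upwards [heq] with x hx
  rcases le_total 0 (h x) with h' | h'
  · rw [ENNReal.ofReal_of_nonpos (p := - h x) (by linarith), ENNReal.ofReal_eq_zero] at hx
    exact le_antisymm hx h'
  · rw [ENNReal.ofReal_of_nonpos h'] at hx
    have := ENNReal.ofReal_eq_zero.mp hx.symm
    simp only [Pi.zero_apply]
    linarith

/-! ### Fourier coefficients of a weak solution -/

/-- The frequency functional. -/
def ell (n : Fin 4 → ℤ) : (Fin 4 → ℝ) →L[ℝ] ℝ :=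
  ∑ i, (n i : ℝ) • ContinuousLinearMap.proj (R := ℝ) (φ := fun _ : Fin 4 => ℝ) i

lemma ell_apply (n : Fin 4 → ℤ) (x : Fin 4 → ℝ) : ell n x = ∑ i, (n i : ℝ) * x i := by
  simp [ell]

lemma ell_single (n : Fin 4 → ℤ) (i : Fin 4) : ell n (Pi.single i 1) = n i := by
  rw [ell_apply]
  simp [Pi.single_apply]

/-- The squared frequency. -/
def nq (n : Fin 4 → ℤ) : ℝ := ∑ i, (n i : ℝ) ^ 2

lemma fd_cos (n : Fin 4 → ℤ) (v y : Fin 4 → ℝ) :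
    fderiv ℝ (fun x => Real.cos (ell n x)) y v = - (ell n v) * Real.sin (ell n y) := by
  rw [((ell n).hasFDerivAt (x := y)).cos.fderiv]
  simp; ring

lemma fd_sin (n : Fin 4 → ℤ) (v y : Fin 4 → ℝ) :
    fderiv ℝ (fun x => Real.sin (ell n x)) y v = (ell n v) * Real.cos (ell n y) := by
  rw [((ell n).hasFDerivAt (x := y)).sin.fderiv]
  simp; ring

lemma lap_cos (n : Fin 4 → ℤ) (x : Fin 4 → ℝ) :
    lap (fun x => Real.cos (ell n x)) x = - nq n * Real.cos (ell n x) := by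
  unfold lap nq
  simp_rw [fd_cos]
  rw [neg_mul, Finset.sum_mul, ← Finset.sum_neg_distrib]
  refine Finset.sum_congr rfl fun i _ => ?_
  have hd : DifferentiableAt ℝ (fun y => Real.sin (ell n y)) x :=
    ((ell n).hasFDerivAt (x := x)).sin.differentiableAt
  rw [fderiv_const_mul hd]
  simp only [smul_apply, fd_sin, ell_single, smul_eq_mul]
  ring

lemma lap_sin (n : Fin 4 → ℤ) (x : Fin 4 → ℝ) :
    lap (fun x => Real.sin (ell n x)) x = - nq n * Real.sin (ell n x) := by
  unfold lap nq
  simp_rw [fd_sin]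
  rw [neg_mul, Finset.sum_mul, ← Finset.sum_neg_distrib]
  refine Finset.sum_congr rfl fun i _ => ?_
  have hd : DifferentiableAt ℝ (fun y => Real.cos (ell n y)) x :=
    ((ell n).hasFDerivAt (x := x)).cos.differentiableAt
  rw [fderiv_const_mul hd]
  simp only [smul_apply, fd_cos, ell_single, smul_eq_mul]
  ring

lemma ell_lpt (n k : Fin 4 → ℤ) : ∃ m : ℤ, ell n (lpt k) = m * (2 * Real.pi) := by
  refine ⟨∑ i, n i * k i, ?_⟩
  rw [ell_apply]
  push_cast
  rw [Finset.sum_mul]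
  refine Finset.sum_congr rfl fun i _ => ?_
  simp only [lpt]; ring

lemma ee_eq (n : Fin 4 → ℤ) (x : Fin 4 → ℝ) :
    ee n x = (Real.cos (ell n x) : ℂ) + (Real.sin (ell n x) : ℂ) * Complex.I := by
  rw [Complex.ofReal_cos, Complex.ofReal_sin, ← Complex.exp_mul_I, ee, ell_apply]
  push_cast
  rw [mul_comm]

lemma ee_per (n k : Fin 4 → ℤ) (x : Fin 4 → ℝ) : ee n (x + lpt k) = ee n x := by
  obtain ⟨m, hm⟩ := ell_lpt n k
  rw [ee_eq, ee_eq, map_add, hm, Real.cos_add_int_mul_two_pi, Real.sin_add_int_mul_two_pi]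

lemma coef_g (g : (Fin 4 → ℝ) → ℝ) (hint : IntegrableOn g FD volume)
    (hweak : ∀ φ : (Fin 4 → ℝ) → ℝ, ContDiff ℝ (⊤ : ℕ∞) φ → Per φ →
      ∫ x in FD, g x * (φ x - lap φ x) = φ 0) (n : Fin 4 → ℤ) :
    ∫ x in FD, (g x : ℂ) * ee n x = ((1 / (1 + nq n) : ℝ) : ℂ) := by
  have hn : 0 ≤ nq n := Finset.sum_nonneg fun i _ => sq_nonneg _
  have hc := hweak (fun x => Real.cos (ell n x))
    (Real.contDiff_cos.comp (ell n).contDiff) (by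
      intro x k
      obtain ⟨m, hm⟩ := ell_lpt n k
      simp only [map_add, hm, Real.cos_add_int_mul_two_pi])
  have hs := hweak (fun x => Real.sin (ell n x))
    (Real.contDiff_sin.comp (ell n).contDiff) (by
      intro x k
      obtain ⟨m, hm⟩ := ell_lpt n k
      simp only [map_add, hm, Real.sin_add_int_mul_two_pi])
  simp only [lap_cos, lap_sin, map_zero, Real.cos_zero, Real.sin_zero] at hc hs
  have e1 : ∀ x, g x * (Real.cos (ell n x) - - nq n * Real.cos (ell n x)) =
    (1 + nq n) * (g x * Real.cos (ell n x)) := fun x => by ring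
  have e2 : ∀ x, g x * (Real.sin (ell n x) - - nq n * Real.sin (ell n x)) =
    (1 + nq n) * (g x * Real.sin (ell n x)) := fun x => by ring
  simp_rw [e1, integral_const_mul] at hc
  simp_rw [e2, integral_const_mul] at hs
  have hs' : ∫ x in FD, g x * Real.sin (ell n x) = 0 := by
    rcases mul_eq_zero.mp hs with h | h
    · linarith
    · exact h
  have hc' : ∫ x in FD, g x * Real.cos (ell n x) = 1 / (1 + nq n) := by
    rw [eq_div_iff (by positivity), mul_comm]; exact hc
  have ic : IntegrableOn (fun x => g x * Real.cos (ell n x)) FD :=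
    Integrable.mul_bdd (c := 1) hint
      (Real.continuous_cos.comp (ell n).continuous).aestronglyMeasurable
      (Filter.Eventually.of_forall fun x => Real.abs_cos_le_one _)
  have is : IntegrableOn (fun x => g x * Real.sin (ell n x)) FD :=
    Integrable.mul_bdd (c := 1) hint
      (Real.continuous_sin.comp (ell n).continuous).aestronglyMeasurable
      (Filter.Eventually.of_forall fun x => Real.abs_sin_le_one _)
  have e3 : ∀ x, (g x : ℂ) * ee n x = ((g x * Real.cos (ell n x) : ℝ) : ℂ) +
      ((g x * Real.sin (ell n x) : ℝ) : ℂ) * Complex.I := by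
    intro x; rw [ee_eq]; push_cast; ring
  simp_rw [e3]
  rw [integral_add ic.ofReal (is.ofReal.mul_const _), integral_mul_const,
    integral_complex_ofReal, integral_complex_ofReal, hc', hs']
  simp

/-! ### Fourier transform of the free kernel -/

/-- Full space-time integrand. -/
def FF (n : Fin 4 → ℤ) (p : ℝ × (Fin 4 → ℝ)) : ℂ :=
  ((1 / (16 * Real.pi ^ 2) * kI (q4 p.2) p.1 : ℝ) : ℂ) * ee n p.2

lemma FF_meas (n : Fin 4 → ℤ) : Measurable (FF n) := by
  have h1 : Measurable fun p : ℝ × (Fin 4 → ℝ) => (ee n p.2) :=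
    (ee_cont n).measurable.comp measurable_snd
  have h2 : Measurable fun p : ℝ × (Fin 4 → ℝ) => q4 p.2 := by
    unfold q4; fun_prop
  unfold FF kI
  refine Measurable.mul ?_ h1
  refine Complex.measurable_ofReal.comp ?_
  fun_prop

lemma FF_eq (n : Fin 4 → ℤ) {t : ℝ} (ht : 0 < t) (x : Fin 4 → ℝ) :
    FF n (t, x) = ((Real.exp (-t) / (16 * Real.pi ^ 2 * t ^ 2) : ℝ) : ℂ) *
      Complex.exp (-((1 / (4 * t) : ℝ) : ℂ) * ∑ i, (x i : ℂ) ^ 2 +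
        ∑ i, (Complex.I * (n i : ℂ)) * (x i : ℂ)) := by
  simp only [FF, kI, ee, q4]
  have e0 : Complex.I * ∑ i, (n i : ℂ) * (x i : ℂ) =
      ∑ i, (Complex.I * (n i : ℂ)) * (x i : ℂ) := by
    rw [Finset.mul_sum]
    exact Finset.sum_congr rfl fun i _ => by ring
  have e : -((∑ i, (x i : ℂ) ^ 2) / (4 * (t : ℂ))) =
      -(1 / (4 * (t : ℂ))) * ∑ i, (x i : ℂ) ^ 2 := by
    ring
  rw [Complex.exp_add, e0]
  push_cast
  rw [e]
  ring

lemma FF_int_x (n : Fin 4 → ℤ) {t : ℝ} (ht : 0 < t) :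
    Integrable (fun x => FF n (t, x)) ∧
    ∫ x, FF n (t, x) = ((Real.exp (-((1 + nq n) * t)) : ℝ) : ℂ) := by
  have hb : 0 < (((1 / (4 * t) : ℝ) : ℂ)).re := by
    rw [Complex.ofReal_re]; positivity
  simp_rw [FF_eq n ht]
  refine ⟨(GaussianFourier.integrable_cexp_neg_mul_sum_add hb _).const_mul _, ?_⟩
  rw [integral_const_mul, GaussianFourier.integral_cexp_neg_mul_sum_add hb]
  have htc : (t : ℂ) ≠ 0 := by exact_mod_cast ht.ne'
  have hpc : (Real.pi : ℂ) ≠ 0 := by exact_mod_cast Real.pi_ne_zero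
  have e1 : ((Fintype.card (Fin 4) : ℂ) / 2) = ((2 : ℕ) : ℂ) := by
    simp; norm_num
  rw [e1, Complex.cpow_natCast]
  have e2 : (∑ i, (Complex.I * (n i : ℂ)) ^ 2) / (4 * ((1 / (4 * t) : ℝ) : ℂ)) =
      ((-(nq n * t) : ℝ) : ℂ) := by
    simp only [mul_pow, Complex.I_sq]
    rw [← Finset.mul_sum]
    unfold nq
    push_cast
    field_simp
  rw [e2, ← Complex.ofReal_exp]
  have e3 : ((Real.pi : ℂ) / ((1 / (4 * t) : ℝ) : ℂ)) ^ 2 = ((16 * Real.pi ^ 2 * t ^ 2 : ℝ) : ℂ) := by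
    push_cast
    field_simp
    norm_num
  rw [e3]
  have e4 : Real.exp (-((1 + nq n) * t)) = Real.exp (-t) * Real.exp (-(nq n * t)) := by
    rw [← Real.exp_add]; congr 1; ring
  rw [e4]
  norm_cast
  field_simp

lemma FF_norm (n : Fin 4 → ℤ) (p : ℝ × (Fin 4 → ℝ)) : (‖FF n p‖ : ℝ) = ‖FF 0 p‖ := by
  simp [FF, ee_norm]

lemma FF_zero (p : ℝ × (Fin 4 → ℝ)) : FF 0 p = ((‖FF 0 p‖ : ℝ) : ℂ) := by
  have h : FF 0 p = ((1 / (16 * Real.pi ^ 2) * kI (q4 p.2) p.1 : ℝ) : ℂ) := by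
    simp [FF, ee]
  rw [h, Complex.norm_real, Real.norm_of_nonneg]
  have := kI_nonneg (q4 p.2) p.1
  positivity

lemma FF_int (n : Fin 4 → ℤ) :
    Integrable (FF n) ((volume.restrict (Set.Ioi (0:ℝ))).prod volume) := by
  rw [integrable_prod_iff (FF_meas n).aestronglyMeasurable]
  constructor
  · filter_upwards [self_mem_ae_restrict measurableSet_Ioi] with t ht
    exact (FF_int_x n ht).1
  · have h1 : IntegrableOn (fun t : ℝ => Real.exp (-t)) (Set.Ioi 0) := by
      simpa using integrableOn_exp_neg_Ioi (0:ℝ)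
    refine h1.congr_fun (fun t ht => ?_) measurableSet_Ioi
    have h2 := (FF_int_x 0 ht).2
    simp_rw [FF_norm n]
    have h3 : ∫ x, FF 0 (t, x) = ((∫ x, ‖FF 0 (t, x)‖ : ℝ) : ℂ) := by
      rw [← integral_complex_ofReal]
      exact integral_congr_ae (Filter.Eventually.of_forall fun x => FF_zero _)
    rw [h3] at h2
    have h4 : ∫ x, ‖FF 0 (t, x)‖ = Real.exp (-((1 + nq 0) * t)) := by exact_mod_cast h2
    rw [h4]
    simp [nq]

lemma FF_int_t (n : Fin 4 → ℤ) (x : Fin 4 → ℝ) :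
    ∫ t in Set.Ioi (0:ℝ), FF n (t, x) = (Kf (q4 x) : ℂ) * ee n x := by
  simp only [FF]
  rw [integral_mul_const, integral_complex_ofReal, integral_const_mul, Kf]

lemma K_int (n : Fin 4 → ℤ) : Integrable (fun x => (Kf (q4 x) : ℂ) * ee n x) := by
  have := (FF_int n).integral_prod_right
  simpa only [FF_int_t] using this

lemma K_int' : Integrable (fun x => Kf (q4 x)) := by
  have := (K_int 0).norm
  refine this.congr (Filter.Eventually.of_forall fun x => ?_)
  simp only [norm_mul, ee_norm, mul_one, Complex.norm_real]
  exact Real.norm_of_nonneg (Kf_nonneg _)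

lemma K_fourier (n : Fin 4 → ℤ) :
    ∫ x, (Kf (q4 x) : ℂ) * ee n x = ((1 / (1 + nq n) : ℝ) : ℂ) := by
  have hn : 0 ≤ nq n := Finset.sum_nonneg fun i _ => sq_nonneg _
  simp_rw [← FF_int_t]
  have hi : Integrable (Function.uncurry fun (t : ℝ) (x : Fin 4 → ℝ) => FF n (t, x))
    ((volume.restrict (Set.Ioi (0:ℝ))).prod volume) := FF_int n
  rw [← integral_integral_swap hi]
  have : ∫ t in Set.Ioi (0:ℝ), ∫ x, FF n (t, x) =
      ∫ t in Set.Ioi (0:ℝ), ((Real.exp (-((1 + nq n) * t)) : ℝ) : ℂ) :=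
    setIntegral_congr_fun measurableSet_Ioi fun t ht => (FF_int_x n ht).2
  rw [this, integral_complex_ofReal]
  congr 1
  have h := integral_exp_mul_Ioi (a := -(1 + nq n)) (by linarith) 0
  simp only [neg_mul] at h
  rw [h, mul_zero, neg_zero, Real.exp_zero, neg_div_neg_eq]

/-! ### Periodization -/

/-- The periodized kernel. -/
def GG (x : Fin 4 → ℝ) : ℝ := ∑' k : Fin 4 → ℤ, Kf (q4 (x - lpt k))

/-- The part of the periodized kernel coming from nonzero lattice points. -/
def RR (x : Fin 4 → ℝ) : ℝ := ∑' k : Fin 4 → ℤ, if k = 0 then 0 else Kf (q4 (x - lpt k))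

/-- An open box containing the fundamental domain. -/
def UU : Set (Fin 4 → ℝ) := {x | ∀ i, |x i| < 3 * Real.pi / 2}

lemma UU_open : IsOpen UU := by
  have : UU = ⋂ i : Fin 4, {x | |x i| < 3 * Real.pi / 2} := by
    ext x; simp [UU]
  rw [this]
  exact isOpen_iInter_of_finite fun i => isOpen_lt (by fun_prop) continuous_const

lemma FD_UU : FD ⊆ UU := by
  intro x hx i
  have h := hx i
  rw [abs_lt]
  constructor <;> linarith [h.1, h.2, Real.pi_pos]

lemma lat_coord {a : ℝ} (ha : |a| < 3 * Real.pi / 2) (k : ℤ) :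
    2 * (k : ℝ) ^ 2 ≤ (a - 2 * Real.pi * k) ^ 2 := by
  rcases eq_or_ne k 0 with rfl | hk
  · simp; positivity
  · have h1 : (1:ℝ) ≤ |(k:ℝ)| := by exact_mod_cast Int.one_le_abs hk
    have h2 : |2 * Real.pi * (k:ℝ)| - |a| ≤ |a - 2 * Real.pi * k| := by
      rw [abs_sub_comm]; exact abs_sub_abs_le_abs_sub _ _
    rw [abs_mul, abs_of_pos Real.two_pi_pos] at h2
    have hp := Real.pi_gt_three
    have h3 : 3 / 2 * |(k:ℝ)| ≤ |a - 2 * Real.pi * k| := by nlinarith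
    rw [← sq_abs (a - 2 * Real.pi * k), ← sq_abs (k:ℝ)]
    nlinarith

lemma nq_ge {k : Fin 4 → ℤ} (hk : k ≠ 0) : 1 ≤ nq k := by
  obtain ⟨i, hi⟩ := Function.ne_iff.mp hk
  have h1 : (1:ℝ) ≤ (k i : ℝ) ^ 2 := by
    have : 1 ≤ (k i) ^ 2 := by
      have : 0 < (k i) ^ 2 := by
        have : k i ≠ 0 := hi
        positivity
      omega
    exact_mod_cast this
  exact h1.trans (Finset.single_le_sum (f := fun i => (k i : ℝ) ^ 2)
    (fun j _ => sq_nonneg _) (Finset.mem_univ i))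

lemma lat_lower {x : Fin 4 → ℝ} (hx : x ∈ UU) {k : Fin 4 → ℤ} (hk : k ≠ 0) :
    1 + nq k ≤ q4 (x - lpt k) := by
  have h1 : 2 * nq k ≤ q4 (x - lpt k) := by
    unfold nq q4
    rw [Finset.mul_sum]
    refine Finset.sum_le_sum fun i _ => ?_
    simp only [Pi.sub_apply, lpt]
    exact lat_coord (hx i) (k i)
  linarith [nq_ge hk]

lemma sum1 : Summable fun k : ℤ => (1 + (k:ℝ) ^ 2)⁻¹ := by
  have h := (Real.summable_one_div_int_pow (p := 2)).mpr (by norm_num)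
  refine Summable.of_norm_bounded_eventually h ?_
  have : ∀ᶠ k : ℤ in Filter.cofinite, k ≠ 0 := Filter.eventually_cofinite_ne 0
  filter_upwards [this] with k hk
  have : (0:ℝ) < (k:ℝ) ^ 2 := by positivity
  rw [Real.norm_of_nonneg (by positivity), one_div]
  gcongr
  linarith

lemma sum4 : Summable fun k : Fin 4 → ℤ => ∏ i, (1 + (k i:ℝ) ^ 2)⁻¹ := by
  classical
  refine summable_of_sum_le (c := ∏ _i : Fin 4, ∑' m : ℤ, (1 + (m:ℝ) ^ 2)⁻¹)
    ?_ fun s => ?_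
  · intro k
    exact Finset.prod_nonneg fun i _ => by positivity
  calc ∑ k ∈ s, ∏ i, (1 + (k i:ℝ) ^ 2)⁻¹
      ≤ ∑ k ∈ (Fintype.piFinset (fun i => s.image fun k => k i) : Finset (Fin 4 → ℤ)), ∏ i, (1 + (k i:ℝ) ^ 2)⁻¹ := by
        refine Finset.sum_le_sum_of_subset_of_nonneg ?_ ?_
        swap
        · intro k _ _
          exact Finset.prod_nonneg fun i _ => by positivity
        intro k hk
        rw [Fintype.mem_piFinset]
        exact fun i => Finset.mem_image_of_mem _ hk
    _ = ∏ i : Fin 4, ∑ m ∈ (s.image (fun k => k i) : Finset ℤ), (1 + (m:ℝ) ^ 2)⁻¹ := by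
        rw [Finset.prod_univ_sum]
    _ ≤ _ := by
        refine Finset.prod_le_prod (fun i _ => Finset.sum_nonneg fun m _ => by positivity)
          fun i _ => ?_
        exact sum1.sum_le_tsum _ fun m _ => by positivity

lemma prod_bound (k : Fin 4 → ℤ) : 1 / (1 + nq k) ^ 4 ≤ ∏ i, (1 + (k i:ℝ) ^ 2)⁻¹ := by
  rw [Finset.prod_inv_distrib, ← one_div]
  have h : ∏ i, (1 + (k i:ℝ) ^ 2) ≤ ∏ _i : Fin 4, (1 + nq k) := by
    refine Finset.prod_le_prod (fun i _ => by positivity) fun i _ => ?_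
    have := (Finset.single_le_sum (f := fun i => (k i : ℝ) ^ 2)
      (fun j _ => sq_nonneg _) (Finset.mem_univ i))
    unfold nq
    linarith
  simp only [Finset.prod_const, Finset.card_univ, Fintype.card_fin] at h
  exact one_div_le_one_div_of_le (Finset.prod_pos fun i _ => by positivity) h

lemma K_major : ∃ u : (Fin 4 → ℤ) → ℝ, Summable u ∧
    ∀ k, ∀ x ∈ UU, ‖(if k = 0 then 0 else Kf (q4 (x - lpt k)) : ℝ)‖ ≤ u k := by
  obtain ⟨C, hC, hd⟩ := Kf_decay
  refine ⟨fun k => C * ∏ i, (1 + (k i:ℝ) ^ 2)⁻¹, sum4.mul_left C, fun k x hx => ?_⟩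
  have hp : 0 ≤ ∏ i, (1 + (k i:ℝ) ^ 2)⁻¹ := Finset.prod_nonneg fun i _ => by positivity
  split_ifs with hk
  · rw [norm_zero]; positivity
  · rw [Real.norm_of_nonneg (Kf_nonneg _)]
    have h1 := lat_lower hx hk
    have h2 := nq_ge hk
    calc _ ≤ C / (q4 (x - lpt k)) ^ 4 := hd _ (by linarith)
      _ ≤ C / (1 + nq k) ^ 4 := by gcongr
      _ = C * (1 / (1 + nq k) ^ 4) := by ring
      _ ≤ _ := mul_le_mul_of_nonneg_left (prod_bound k) hC.le

lemma q4_cont : Continuous q4 := by unfold q4; fun_prop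

lemma RR_cont : ContinuousOn RR UU := by
  obtain ⟨u, hu, hb⟩ := K_major
  refine continuousOn_tsum (fun k => ?_) hu hb
  split_ifs with hk
  · exact continuousOn_const
  · refine Kf_cont.comp (q4_cont.comp (continuous_id.sub continuous_const)).continuousOn ?_
    intro x hx
    have := lat_lower hx hk
    have := nq_ge hk
    change 0 < q4 (x - lpt k)
    linarith

lemma RR_bdd : ∃ C : ℝ, ∀ x ∈ UU, |RR x| ≤ C := by
  obtain ⟨u, hu, hb⟩ := K_major
  exact ⟨∑' k, u k, fun x hx => tsum_of_norm_bounded hu.hasSum fun k => hb k x hx⟩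

lemma RR_nonneg (x : Fin 4 → ℝ) : 0 ≤ RR x := by
  refine tsum_nonneg fun k => ?_
  split_ifs
  · exact le_rfl
  · exact Kf_nonneg _

lemma GG_eq {x : Fin 4 → ℝ} (hx : x ∈ UU) : GG x = Kf (q4 x) + RR x := by
  obtain ⟨u, hu, hb⟩ := K_major
  have hs : Summable fun k : Fin 4 → ℤ => Kf (q4 (x - lpt k)) := by
    refine Summable.of_norm_bounded_eventually hu ?_
    filter_upwards [Filter.eventually_cofinite_ne (0 : Fin 4 → ℤ)] with k hk
    simpa [hk] using hb k x hx
  unfold GG RR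
  rw [hs.tsum_eq_add_tsum_ite 0]
  congr 3
  ext i
  simp [lpt]

lemma lpt_add (k l : Fin 4 → ℤ) : lpt (k + l) = lpt k + lpt l := by
  ext i; simp [lpt]; ring

lemma lpt_sub (k l : Fin 4 → ℤ) : lpt (k - l) = lpt k - lpt l := by
  ext i; simp [lpt]; ring

lemma GG_per : Per GG := by
  intro x k
  unfold GG
  rw [← (Equiv.addRight k).tsum_eq fun l => Kf (q4 (x + lpt k - lpt l))]
  refine tsum_congr fun l => ?_
  simp only [Equiv.coe_addRight, lpt_add]
  congr 2
  abel

lemma latDist_per : Per latDist := by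
  intro x k
  unfold latDist
  refine (Equiv.iInf_congr (Equiv.addRight k) fun l => ?_).symm
  simp only [Equiv.coe_addRight, lpt_add]
  congr 1
  abel

lemma coord_min {a : ℝ} (ha : a ∈ Set.Ioc (-Real.pi) Real.pi) (k : ℤ) :
    a ^ 2 ≤ (a - 2 * Real.pi * k) ^ 2 := by
  obtain ⟨h1, h2⟩ := ha
  have hp := Real.pi_pos
  have key : 0 ≤ 4 * Real.pi * (k * (Real.pi * k - a)) := by
    refine mul_nonneg (by positivity) ?_
    rcases lt_trichotomy k 0 with h | h | h
    · have hk : (k:ℝ) ≤ -1 := by exact_mod_cast Int.le_sub_one_of_lt h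
      exact mul_nonneg_of_nonpos_of_nonpos (by linarith) (by nlinarith)
    · simp [h]
    · have hk : (1:ℝ) ≤ k := by exact_mod_cast h
      exact mul_nonneg (by linarith) (by nlinarith)
  nlinarith

lemma latDist_FD {x : Fin 4 → ℝ} (hx : x ∈ FD) : latDist x = Real.sqrt (q4 x) := by
  unfold latDist
  apply le_antisymm
  · refine (ciInf_le ⟨0, ?_⟩ (0 : Fin 4 → ℤ)).trans (le_of_eq ?_)
    · rintro _ ⟨k, rfl⟩
      exact Real.sqrt_nonneg _
    · simp [enorm4, q4, lpt]
  · refine le_ciInf fun k => Real.sqrt_le_sqrt (Finset.sum_le_sum fun i _ => ?_)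
    exact coord_min (hx i) (k i)

lemma exists_FD (x : Fin 4 → ℝ) : ∃ k : Fin 4 → ℤ, x + lpt k ∈ FD := by
  have h : ∀ i, ∃ m : ℤ, x i + 2 * Real.pi * m ∈ Set.Ioc (-Real.pi) Real.pi := by
    intro i
    obtain ⟨m, hm, _⟩ := existsUnique_add_zsmul_mem_Ioc Real.two_pi_pos (x i) (-Real.pi)
    refine ⟨m, ?_⟩
    have h2 : -Real.pi + 2 * Real.pi = Real.pi := by ring
    simp only [zsmul_eq_mul, h2] at hm
    rwa [mul_comm (2 * Real.pi)]
  choose k hk using h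
  exact ⟨k, fun i => hk i⟩

lemma FD_unique {x : Fin 4 → ℝ} {k l : Fin 4 → ℤ} (hk : x + lpt k ∈ FD) (hl : x + lpt l ∈ FD) :
    k = l := by
  funext i
  obtain ⟨m, _, hu⟩ := existsUnique_add_zsmul_mem_Ioc Real.two_pi_pos (x i) (-Real.pi)
  have h2 : -Real.pi + 2 * Real.pi = Real.pi := by ring
  simp only [zsmul_eq_mul, h2] at hu
  have a1 := hk i
  have a2 := hl i
  simp only [Pi.add_apply, lpt] at a1 a2
  rw [hu (k i) (by rwa [mul_comm]), hu (l i) (by rwa [mul_comm])]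

lemma Sreg_add {x : Fin 4 → ℝ} (hx : x ∈ Sreg) (k : Fin 4 → ℤ) : x + lpt k ∈ Sreg := by
  intro l h
  apply hx (l - k)
  rw [lpt_sub, ← h]; abel

lemma q4_pos {x : Fin 4 → ℝ} (hx : x ∈ Sreg) : 0 < q4 x := by
  have hne : x ≠ 0 := by
    have := hx 0
    intro h
    apply this
    rw [h]; ext i; simp [lpt]
  obtain ⟨i, hi⟩ := Function.ne_iff.mp hne
  have hi : x i ≠ 0 := hi
  have : 0 < x i ^ 2 := by positivity
  exact this.trans_le (Finset.single_le_sum (f := fun i => (x i) ^ 2)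
    (fun j _ => sq_nonneg _) (Finset.mem_univ i))

lemma GG_contOn : ContinuousOn GG Sreg := by
  intro x hx
  apply ContinuousAt.continuousWithinAt
  obtain ⟨k, hk⟩ := exists_FD x
  have hpos := q4_pos (Sreg_add hx k)
  have hU : UU ∈ nhds (x + lpt k) := UU_open.mem_nhds (FD_UU hk)
  have h1 : ContinuousAt GG (x + lpt k) := by
    have h2 : ContinuousAt (fun y => Kf (q4 y) + RR y) (x + lpt k) := by
      refine ContinuousAt.add ?_ (RR_cont.continuousAt hU)
      exact ContinuousAt.comp (f := q4) (Kf_cont.continuousAt (Ioi_mem_nhds hpos))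
        q4_cont.continuousAt
    refine h2.congr ?_
    filter_upwards [hU] with y hy
    exact (GG_eq hy).symm
  have h3 : ContinuousAt (fun y => GG (y + lpt k)) x :=
    ContinuousAt.comp (f := fun y => y + lpt k) h1 (by fun_prop)
  refine h3.congr (Filter.Eventually.of_forall fun y => GG_per y k)

lemma GG_pos {x : Fin 4 → ℝ} (hx : x ∈ Sreg) : 0 < GG x := by
  obtain ⟨k, hk⟩ := exists_FD x
  rw [← GG_per x k, GG_eq (FD_UU hk)]
  linarith [RR_nonneg (x + lpt k), Kf_pos (q4_pos (Sreg_add hx k))]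

lemma GG_bound : ∃ C : ℝ, ∀ x ∈ Sreg,
    |GG x - 1 / (4 * Real.pi ^ 2 * latDist x ^ 2)
      - (1 / (8 * Real.pi ^ 2)) * Real.log (latDist x)| ≤ C := by
  obtain ⟨C1, h1⟩ := Kf_asymp
  obtain ⟨C2, h2⟩ := RR_bdd
  refine ⟨C1 + C2, fun x hx => ?_⟩
  obtain ⟨k, hk⟩ := exists_FD x
  rw [← GG_per x k, ← latDist_per x k]
  have hx' := Sreg_add hx k
  generalize x + lpt k = y at hk hx'
  have hp := q4_pos hx'
  have hle : q4 y ≤ 100 := by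
    have : q4 y ≤ ∑ _i : Fin 4, (25:ℝ) := by
      refine Finset.sum_le_sum fun i _ => ?_
      have h := hk i
      nlinarith [h.1, h.2, Real.pi_le_four, Real.pi_pos]
    simp at this
    linarith
  rw [GG_eq (FD_UU hk), latDist_FD hk, Real.sq_sqrt hp.le, Real.log_sqrt hp.le]
  have e : Kf (q4 y) + RR y - 1 / (4 * Real.pi ^ 2 * q4 y) -
      1 / (8 * Real.pi ^ 2) * (Real.log (q4 y) / 2) =
      (Kf (q4 y) - 1 / (4 * Real.pi ^ 2 * q4 y) - 1 / (16 * Real.pi ^ 2) * Real.log (q4 y))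
        + RR y := by
    field_simp
    ring
  rw [e]
  exact (abs_add_le _ _).trans (add_le_add (h1 _ hp hle) (h2 _ (FD_UU hk)))

lemma FD_fin : volume FD ≠ ⊤ := by
  have : FD = Set.univ.pi fun _ => Set.Ioc (-Real.pi) Real.pi := by
    ext x; simp [FD]
  rw [this, Real.volume_pi_Ioc]
  exact ENNReal.prod_ne_top fun i _ => ENNReal.ofReal_ne_top

lemma GG_int : IntegrableOn GG FD := by
  obtain ⟨C2, h2⟩ := RR_bdd
  have hR : IntegrableOn RR FD := by
    have : IsFiniteMeasure ((volume : Measure (Fin 4 → ℝ)).restrict FD) :=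
      ⟨by rw [Measure.restrict_apply_univ]; exact FD_fin.lt_top⟩
    refine Integrable.of_bound ((RR_cont.mono FD_UU).aestronglyMeasurable FD_meas) C2 ?_
    filter_upwards [self_mem_ae_restrict FD_meas] with x hx
    exact h2 x (FD_UU hx)
  refine (K_int'.integrableOn.add hR).congr_fun (fun x hx => ?_) FD_meas
  exact (GG_eq (FD_UU hx)).symm

/-- Unfolding over the lattice. -/
lemma unfold_sum {E : Type*} [NormedAddCommGroup E] [NormedSpace ℝ E]
    {f : (Fin 4 → ℝ) → E} (hf : Integrable f) :
    HasSum (fun k : Fin 4 → ℤ => ∫ x in FD, f (x - lpt k)) (∫ x, f x) := by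
  have hm : ∀ k : Fin 4 → ℤ, MeasurableSet ((fun x => x + lpt k) ⁻¹' FD) := fun k =>
    (measurable_id.add_const _) FD_meas
  have hd : Pairwise (Function.onFun Disjoint fun k : Fin 4 → ℤ => (fun x => x + lpt k) ⁻¹' FD) := by
    intro k l hkl
    refine Set.disjoint_left.mpr fun x hx hx' => hkl (FD_unique hx hx')
  have hu : (⋃ k : Fin 4 → ℤ, (fun x => x + lpt k) ⁻¹' FD) = Set.univ := by
    refine Set.eq_univ_of_forall fun x => ?_
    obtain ⟨k, hk⟩ := exists_FD x
    exact Set.mem_iUnion.mpr ⟨k, hk⟩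
  have h := hasSum_integral_iUnion (μ := volume) (f := f) hm hd (by rw [hu]; exact hf.integrableOn)
  rw [hu, setIntegral_univ] at h
  convert h using 2 with k
  have hmp := measurePreserving_add_right (volume : Measure (Fin 4 → ℝ)) (lpt k)
  have := hmp.setIntegral_preimage_emb (MeasurableEquiv.addRight (lpt k)).measurableEmbedding
    (fun x => f (x - lpt k)) FD
  rw [← this]
  simp

lemma coef_GG (n : Fin 4 → ℤ) :
    ∫ x in FD, (GG x : ℂ) * ee n x = ((1 / (1 + nq n) : ℝ) : ℂ) := by
  have h1 := unfold_sum (K_int n)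
  have h2 := unfold_sum (K_int n).norm
  have hi : ∀ k : Fin 4 → ℤ, Integrable (fun x => (Kf (q4 (x - lpt k)) : ℂ) * ee n (x - lpt k))
      (volume.restrict FD) := fun k => ((K_int n).comp_sub_right (lpt k)).integrableOn
  have h3 := hasSum_integral_of_summable_integral_norm hi h2.summable
  rw [← K_fourier n, h1.unique h3]
  refine setIntegral_congr_fun FD_meas fun x _ => ?_
  have he : ∀ k, ee n (x - lpt k) = ee n x := fun k => by
    rw [← ee_per n k (x - lpt k), sub_add_cancel]
  simp only [he]
  rw [tsum_mul_right, ← Complex.ofReal_tsum, GG]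

lemma ae_eq (g : (Fin 4 → ℝ) → ℝ) (hper : Per g) (hint : IntegrableOn g FD volume)
    (hweak : ∀ φ : (Fin 4 → ℝ) → ℝ, ContDiff ℝ (⊤ : ℕ∞) φ → Per φ →
      ∫ x in FD, g x * (φ x - lap φ x) = φ 0) : GG =ᵐ[volume] g := by
  have hb : ∀ {h : (Fin 4 → ℝ) → ℝ}, IntegrableOn h FD → ∀ n,
      IntegrableOn (fun x => (h x : ℂ) * ee n x) FD := fun {h} hh n =>
    Integrable.mul_bdd (c := 1) hh.ofReal (ee_cont n).aestronglyMeasurable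
      (Filter.Eventually.of_forall fun x => (ee_norm n x).le)
  have h0 := uniq (h := fun x => GG x - g x) (GG_int.sub hint) (by
    intro n
    have e : ∀ x, ((GG x - g x : ℝ) : ℂ) * ee n x = (GG x : ℂ) * ee n x - (g x : ℂ) * ee n x := by
      intro x; push_cast; ring
    simp_rw [e]
    rw [integral_sub (hb GG_int n) (hb hint n), coef_GG, coef_g g hint hweak, sub_self])
  have h1 : ∀ᵐ y : Fin 4 → ℝ, y ∈ FD → GG y = g y := by
    have := (ae_restrict_iff' FD_meas).mp h0
    filter_upwards [this] with y hy hyF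
    have := hy hyF
    simp only [Pi.zero_apply] at this
    linarith
  have h2 : ∀ᵐ x : Fin 4 → ℝ, ∀ k : Fin 4 → ℤ, x + lpt k ∈ FD → GG (x + lpt k) = g (x + lpt k) :=
    ae_all_iff.mpr fun k =>
      (measurePreserving_add_right (volume : Measure (Fin 4 → ℝ)) (lpt k)).quasiMeasurePreserving.ae h1
  filter_upwards [h2] with x hx
  obtain ⟨k, hk⟩ := exists_FD x
  rw [← GG_per x k, ← hper x k]
  exact hx k hk

/-- Lemma `lem:G`: the Green's function `G` of `(1-Δ)` on `𝕋⁴`, i.e. the (periodic,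
locally integrable) distributional solution of `(1-Δ)G = δ₀`, is continuous and strictly
positive on `𝕋⁴ \ {0}` (after modification on a null set), and
`sup_{x ≠ 0} |G(x) - 1/(4π²|x|²) - (1/(8π²)) log|x|| < ∞`. -/
theorem stmt8 (g : (Fin 4 → ℝ) → ℝ) (hper : Per g) (hint : IntegrableOn g FD volume)
    (hweak : ∀ φ : (Fin 4 → ℝ) → ℝ, ContDiff ℝ (⊤ : ℕ∞) φ → Per φ →
      ∫ x in FD, g x * (φ x - lap φ x) = φ 0) :
    ∃ g' : (Fin 4 → ℝ) → ℝ, g' =ᵐ[volume] g ∧ Per g' ∧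
      ContinuousOn g' Sreg ∧ (∀ x ∈ Sreg, 0 < g' x) ∧
      ∃ C : ℝ, ∀ x ∈ Sreg,
        |g' x - 1 / (4 * Real.pi ^ 2 * latDist x ^ 2)
            - (1 / (8 * Real.pi ^ 2)) * Real.log (latDist x)| ≤ C := by
  exact ⟨GG, ae_eq g hper hint hweak, GG_per, GG_contOn, fun x hx => GG_pos hx, GG_bound⟩

end
end

section
/- Let ρ ∈ C_c^∞(ℝ⁴) be nonnegative, radial, supported in (−1,1)⁴, with ∫ρ = 1, set ρ_ε(x) = ε^{-4} ρ(x/ε), and let G_ε = ρ_ε ⋆ G be the mollified Green's function of (1 − Δ) on 𝕋⁴. Then there is a constant C > 0 such that |G_ε(x)| ≤ C/(|x|² + ε²) for all x ∈ 𝕋⁴ and ε ∈ (0,1). -/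
open MeasureTheory Real

noncomputable section

/-- The rescaled mollifier `ρ_ε(x) = ε^{-4} ρ(x/ε)`. -/
def moll (ρ : (Fin 4 → ℝ) → ℝ) (ε : ℝ) (x : Fin 4 → ℝ) : ℝ :=
  ε⁻¹ ^ 4 * ρ (fun i => x i / ε)

/-- The mollified Green's function `G_ε = ρ_ε ⋆ G`. -/
def Geps (g ρ : (Fin 4 → ℝ) → ℝ) (ε : ℝ) (x : Fin 4 → ℝ) : ℝ :=
  ∫ y : Fin 4 → ℝ, moll ρ ε y * g (x - y)

/-- The nearest lattice index. -/
def rdx (z : Fin 4 → ℝ) : Fin 4 → ℤ := fun i => round (z i / (2 * Real.pi))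

lemma enorm4_eq (x : Fin 4 → ℝ) : enorm4 x = ‖WithLp.toLp 2 x‖ := by
  simp [enorm4, EuclideanSpace.norm_eq]

lemma enorm4_nonneg (x : Fin 4 → ℝ) : 0 ≤ enorm4 x := Real.sqrt_nonneg _

lemma enorm4_add (x y : Fin 4 → ℝ) : enorm4 (x + y) ≤ enorm4 x + enorm4 y := by
  simp only [enorm4_eq, WithLp.toLp_add]
  exact norm_add_le _ _

lemma coord_le_enorm4 (x : Fin 4 → ℝ) (i : Fin 4) : |x i| ≤ enorm4 x := by
  unfold enorm4
  apply Real.le_sqrt_of_sq_le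
  rw [sq_abs]
  exact Finset.single_le_sum (f := fun j => x j ^ 2) (fun j _ => sq_nonneg _) (Finset.mem_univ i)

lemma enorm4_le (x : Fin 4 → ℝ) (r : ℝ) (hr : 0 ≤ r) (h : ∀ i, |x i| ≤ r) :
    enorm4 x ≤ 2 * r := by
  unfold enorm4
  apply Real.sqrt_le_iff.2 ⟨by positivity, ?_⟩
  calc ∑ i, x i ^ 2 ≤ ∑ i : Fin 4, r ^ 2 := by
        apply Finset.sum_le_sum
        intro i _
        exact sq_le_sq' (abs_le.1 (h i)).1 (abs_le.1 (h i)).2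
    _ = (2 * r) ^ 2 := by simp; ring

lemma coord_rdx (z : Fin 4 → ℝ) (k : ℤ) (i : Fin 4) :
    |z i - 2 * Real.pi * (rdx z i : ℝ)| ≤ |z i - 2 * Real.pi * (k : ℝ)| := by
  have h := round_le (z i / (2 * Real.pi)) k
  have hp : (0:ℝ) < 2 * Real.pi := by positivity
  have e : ∀ m : ℤ, z i - 2 * Real.pi * (m : ℝ) = 2 * Real.pi * (z i / (2 * Real.pi) - m) := by
    intro m; field_simp
  rw [e, e, abs_mul (2 * Real.pi), abs_mul (2 * Real.pi)]
  exact mul_le_mul_of_nonneg_left h (abs_nonneg _)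

lemma latDist_bdd (x : Fin 4 → ℝ) :
    BddBelow (Set.range fun k : Fin 4 → ℤ => enorm4 (x - lpt k)) :=
  ⟨0, by rintro _ ⟨k, rfl⟩; exact enorm4_nonneg _⟩

lemma norm_le_latDist (z : Fin 4 → ℝ) : ‖z - lpt (rdx z)‖ ≤ latDist z := by
  apply le_ciInf
  intro k
  apply (pi_norm_le_iff_of_nonneg (enorm4_nonneg _)).2
  intro i
  rw [Real.norm_eq_abs]
  refine le_trans ?_ (coord_le_enorm4 _ i)
  exact coord_rdx z (k i) i

lemma latDist_nonneg (x : Fin 4 → ℝ) : 0 ≤ latDist x :=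
  (norm_nonneg _).trans (norm_le_latDist x)

lemma latDist_pos (x : Fin 4 → ℝ) (hx : x ∈ Sreg) : 0 < latDist x := by
  refine lt_of_lt_of_le ?_ (norm_le_latDist x)
  exact norm_pos_iff.2 (sub_ne_zero.2 (hx _))

lemma latDist_le_seven (x : Fin 4 → ℝ) : latDist x ≤ 7 := by
  refine (ciInf_le (latDist_bdd x) (rdx x)).trans ?_
  refine (enorm4_le _ Real.pi Real.pi_pos.le ?_).trans (by linarith [Real.pi_lt_d2])
  intro i
  have h := abs_sub_round (x i / (2 * Real.pi))
  have hp : (0:ℝ) < 2 * Real.pi := by positivity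
  have e : (x - lpt (rdx x)) i = 2 * Real.pi * (x i / (2 * Real.pi) - round (x i / (2 * Real.pi))) := by
    simp only [Pi.sub_apply, lpt, rdx]; field_simp
  rw [e, abs_mul, abs_of_pos hp]
  nlinarith

lemma latDist_tri (x z : Fin 4 → ℝ) : latDist x ≤ latDist z + enorm4 (x - z) := by
  rw [← sub_le_iff_le_add]
  apply le_ciInf
  intro k
  rw [sub_le_iff_le_add]
  refine (ciInf_le (latDist_bdd x) k).trans ?_
  refine le_trans (le_of_eq ?_) (enorm4_add _ _)
  congr 1
  abel

lemma rdx_near (x z : Fin 4 → ℝ) (h : ∀ i, |x i - z i| < 1) :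
    rdx z - rdx x ∈ Fintype.piFinset (fun _ : Fin 4 => Finset.Icc (-1:ℤ) 1) := by
  rw [Fintype.mem_piFinset]
  intro i
  have h1 := abs_le.1 (abs_sub_round (x i / (2 * Real.pi)))
  have h2 := abs_le.1 (abs_sub_round (z i / (2 * Real.pi)))
  have hp : (1:ℝ) < 2 * Real.pi := by linarith [Real.pi_gt_three]
  have h3 : |x i / (2 * Real.pi) - z i / (2 * Real.pi)| < 1 := by
    rw [← sub_div, abs_div, abs_of_pos (by linarith : (0:ℝ) < 2 * Real.pi),
      div_lt_one (by linarith)]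
    linarith [h i]
  have h4 := abs_lt.1 h3
  simp only [Pi.sub_apply, rdx, Finset.mem_Icc]
  have a : ((round (z i / (2 * Real.pi)) - round (x i / (2 * Real.pi)) : ℤ) : ℝ) < 2 := by
    push_cast; linarith [h1.1, h1.2, h2.1, h2.2, h4.1, h4.2]
  have b : (-2 : ℝ) < ((round (z i / (2 * Real.pi)) - round (x i / (2 * Real.pi)) : ℤ) : ℝ) := by
    push_cast; linarith [h1.1, h1.2, h2.1, h2.2, h4.1, h4.2]
  have a' : (round (z i / (2 * Real.pi)) - round (x i / (2 * Real.pi)) : ℤ) < 2 := by exact_mod_cast a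
  have b' : -2 < (round (z i / (2 * Real.pi)) - round (x i / (2 * Real.pi)) : ℤ) := by exact_mod_cast b
  constructor <;> omega

/-- The truncated singular kernel. -/
def hker (w : Fin 4 → ℝ) : ℝ := (Set.Iic (1:ℝ)).indicator (fun r => (r ^ 2)⁻¹) ‖w‖

lemma hker_nonneg (w : Fin 4 → ℝ) : 0 ≤ hker w := by
  unfold hker
  apply Set.indicator_nonneg
  intro r _
  positivity

lemma hker_integrable : Integrable hker volume := by
  unfold hker
  rw [integrable_fun_norm_addHaar (μ := (volume : Measure (Fin 4 → ℝ)))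
    (f := (Set.Iic (1:ℝ)).indicator (fun r => (r ^ 2)⁻¹))]
  have : IntegrableOn (fun y : ℝ => y) (Set.Ioc 0 1) := by
    exact (continuous_id.integrableOn_Icc (a := (0:ℝ)) (b := 1)).mono_set Set.Ioc_subset_Icc_self
  have h2 : IntegrableOn ((Set.Ioc (0:ℝ) 1).indicator (fun y : ℝ => y)) (Set.Ioi 0) :=
    ((integrable_indicator_iff measurableSet_Ioc).2 this).integrableOn
  refine h2.congr_fun ?_ measurableSet_Ioi
  intro y hy
  have hy0 : 0 < y := hy
  by_cases h : y ≤ 1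
  · simp [h, hy0]
    field_simp
  · simp [h]

lemma inv_le_hker (w : Fin 4 → ℝ) (p M : ℝ) (hp : 0 ≤ p) (hM : p ≤ M) :
    p * (‖w‖ ^ 2)⁻¹ ≤ p + M * hker w := by
  by_cases h : ‖w‖ ≤ 1
  · have : hker w = (‖w‖ ^ 2)⁻¹ := by simp [hker, h]
    rw [this]
    have : 0 ≤ (‖w‖ ^ 2)⁻¹ := by positivity
    nlinarith
  · have h1 : (‖w‖ ^ 2)⁻¹ ≤ 1 := by
      apply inv_le_one_of_one_le₀
      nlinarith
    have := hker_nonneg w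
    nlinarith [mul_nonneg (hp.trans hM) this]

lemma sreg_ae (x : Fin 4 → ℝ) (ε : ℝ) (hε : 0 < ε) :
    ∀ᵐ u : Fin 4 → ℝ, x - ε • u ∈ Sreg := by
  have hc : (Set.range fun k : Fin 4 → ℤ => ε⁻¹ • (x - lpt k)).Countable := Set.countable_range _
  filter_upwards [hc.ae_notMem volume] with u hu
  intro k hk
  apply hu
  refine ⟨k, ?_⟩
  simp only
  rw [← hk]
  simp [smul_smul, hε.ne']

lemma g_bound (g : (Fin 4 → ℝ) → ℝ) (C₀ : ℝ)
    (hexp : ∀ x ∈ Sreg,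
      |g x - 1 / (4 * Real.pi ^ 2 * latDist x ^ 2)
          - (1 / (8 * Real.pi ^ 2)) * Real.log (latDist x)| ≤ C₀)
    (z : Fin 4 → ℝ) (hz : z ∈ Sreg) :
    latDist z ^ 2 * |g z| ≤ 1 + 7 + 7 ^ 3 + |C₀| * 49 := by
  have h := (hexp z hz).trans (le_abs_self _)
  have hd := latDist_pos z hz
  have h7 := latDist_le_seven z
  set d := latDist z
  have hpi : (1:ℝ) ≤ Real.pi ^ 2 := by nlinarith [Real.pi_gt_three]
  have hl : |Real.log d| ≤ d + d⁻¹ := by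
    rw [abs_le]
    have h1 := Real.log_le_sub_one_of_pos hd
    have h2 := Real.log_le_sub_one_of_pos (inv_pos.2 hd)
    rw [Real.log_inv] at h2
    have : 0 < d⁻¹ := by positivity
    constructor <;> linarith
  have e1 : 1 / (4 * Real.pi ^ 2 * d ^ 2) ≤ 1 / d ^ 2 := by
    apply one_div_le_one_div_of_le (by positivity)
    nlinarith [sq_nonneg d]
  have e2 : |1 / (8 * Real.pi ^ 2) * Real.log d| ≤ d + d⁻¹ := by
    rw [abs_mul]
    have : |1 / (8 * Real.pi ^ 2)| ≤ 1 := by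
      rw [abs_of_nonneg (by positivity), div_le_one (by positivity)]
      linarith
    calc _ ≤ 1 * |Real.log d| := mul_le_mul_of_nonneg_right this (abs_nonneg _)
      _ ≤ _ := by rwa [one_mul]
  have e0 : 0 ≤ 1 / (4 * Real.pi ^ 2 * d ^ 2) := by positivity
  have hg : |g z| ≤ 1 / d ^ 2 + (d + d⁻¹) + |C₀| := by
    rw [abs_le] at h e2 ⊢
    constructor <;> linarith [h.1, h.2, e2.1, e2.2]
  calc d ^ 2 * |g z| ≤ d ^ 2 * (1 / d ^ 2 + (d + d⁻¹) + |C₀|) := by gcongr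
    _ = 1 + d + d ^ 3 + |C₀| * d ^ 2 := by field_simp; ring
    _ ≤ 1 + 7 + 7 ^ 3 + |C₀| * 7 ^ 2 := by gcongr
    _ = _ := by norm_num

lemma Geps_eq (g ρ : (Fin 4 → ℝ) → ℝ) (ε : ℝ) (hε : 0 < ε) (x : Fin 4 → ℝ) :
    Geps g ρ ε x = ∫ u : Fin 4 → ℝ, ρ u * g (x - ε • u) := by
  have h := Measure.integral_comp_smul (volume : Measure (Fin 4 → ℝ))
    (fun u => ρ u * g (x - ε • u)) ε⁻¹
  have e : ∀ y : Fin 4 → ℝ, moll ρ ε y * g (x - y) =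
      ε⁻¹ ^ 4 * (ρ (ε⁻¹ • y) * g (x - ε • ε⁻¹ • y)) := by
    intro y
    have : (fun i => y i / ε) = ε⁻¹ • y := by
      ext i; simp [div_eq_inv_mul]
    rw [smul_smul, mul_inv_cancel₀ hε.ne', one_smul, moll, this, mul_assoc]
  unfold Geps
  simp_rw [e]
  rw [integral_const_mul, h]
  simp only [Module.finrank_fin_fun, smul_eq_mul]
  rw [abs_of_pos (by positivity), ← mul_assoc, mul_inv_cancel₀ (by positivity), one_mul]


/-- Lemma `lem_greens_function_order_bound`, first bound: with `ρ ∈ C_c^∞` nonnegative,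
radial, supported in `(-1,1)⁴`, `∫ρ = 1`, and `G` the Green's function of `(1-Δ)` on `𝕋⁴`
(given through its expansion `G(x) = 1/(4π²|x|²) + (1/(8π²))log|x| + O(1)`), the mollified
Green's function `G_ε = ρ_ε ⋆ G` satisfies `|G_ε(x)| ≤ C/(|x|² + ε²)` for all `x ∈ 𝕋⁴`
and `ε ∈ (0,1)`. -/
theorem stmt9 (g ρ : (Fin 4 → ℝ) → ℝ)
    (hper : Per g) (hloc : LocallyIntegrable g volume) (C₀ : ℝ)
    (hexp : ∀ x ∈ Sreg,
      |g x - 1 / (4 * Real.pi ^ 2 * latDist x ^ 2)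
          - (1 / (8 * Real.pi ^ 2)) * Real.log (latDist x)| ≤ C₀)
    (hρsmooth : ContDiff ℝ (⊤ : ℕ∞) ρ) (hρpos : ∀ x, 0 ≤ ρ x)
    (hρrad : ∀ x y, enorm4 x = enorm4 y → ρ x = ρ y)
    (hρsupp : ∀ x, ρ x ≠ 0 → ∀ i, |x i| < 1)
    (hρint : ∫ x : Fin 4 → ℝ, ρ x = 1) :
    ∃ C : ℝ, 0 < C ∧ ∀ ε ∈ Set.Ioo (0:ℝ) 1, ∀ x : Fin 4 → ℝ,
      |Geps g ρ ε x| ≤ C / (latDist x ^ 2 + ε ^ 2) := by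
  have hρi : Integrable ρ volume := by
    by_contra h
    rw [integral_undef h] at hρint
    norm_num at hρint
  obtain ⟨M, hM⟩ : ∃ M, ∀ x, ‖ρ x‖ ≤ M := by
    apply hρsmooth.continuous.bounded_above_of_compact_support
    apply HasCompactSupport.intro (isCompact_closedBall (0 : Fin 4 → ℝ) 1)
    intro x hx
    by_contra h
    apply hx
    rw [mem_closedBall_zero_iff]
    apply (pi_norm_le_iff_of_nonneg zero_le_one).2
    intro i
    exact (hρsupp x h i).le
  have hM0 : 0 ≤ M := (norm_nonneg _).trans (hM 0)
  have hM' : ∀ x, ρ x ≤ M := fun x => (le_abs_self _).trans (hM x)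
  set A : ℝ := 1 + 7 + 7 ^ 3 + |C₀| * 49 with hA
  have hA0 : 0 < A := by positivity
  set J := Fintype.piFinset (fun _ : Fin 4 => Finset.Icc (-1:ℤ) 1) with hJ
  set I := ∫ w, hker w with hI
  have hI0 : 0 ≤ I := integral_nonneg hker_nonneg
  refine ⟨A * (2 + 9 * ∑ j ∈ J, (1 + M * I)), by positivity, ?_⟩
  rintro ε ⟨hε, hε1⟩ x
  rw [le_div_iff₀ (by positivity), Geps_eq g ρ ε hε x]
  set D := latDist x ^ 2 + ε ^ 2 with hD
  have hD0 : 0 ≤ D := by positivity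
  let a : (Fin 4 → ℤ) → (Fin 4 → ℝ) := fun j => ε⁻¹ • (x - lpt (rdx x + j))
  let F : (Fin 4 → ℝ) → ℝ := fun u =>
    A * (2 * ρ u + 9 * ∑ j ∈ J, (ρ u + M * hker (a j - u)))
  have hFj : ∀ j, Integrable (fun u => ρ u + M * hker (a j - u)) volume := fun j =>
    hρi.add ((hker_integrable.comp_sub_left (a j)).const_mul M)
  have hFi : Integrable F volume :=
    ((hρi.const_mul 2).add ((integrable_finsetSum J fun j _ => hFj j).const_mul 9)).const_mul A
  have hFint : ∫ u, F u = A * (2 + 9 * ∑ j ∈ J, (1 + M * I)) := by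
    simp only [F]
    rw [integral_const_mul, integral_add (hρi.const_mul 2)
      ((integrable_finsetSum J fun j _ => hFj j).const_mul 9), integral_const_mul,
      integral_const_mul, integral_finsetSum J fun j _ => hFj j, hρint, mul_one]
    congr 3
    apply Finset.sum_congr rfl
    intro j _
    rw [integral_add hρi ((hker_integrable.comp_sub_left (a j)).const_mul M), hρint,
      integral_const_mul, integral_sub_left_eq_self hker volume (a j)]
  have key : ∀ᵐ u : Fin 4 → ℝ, ‖D * (ρ u * g (x - ε • u))‖ ≤ F u := by
    filter_upwards [sreg_ae x ε hε] with u hz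
    have hs0 : ∀ j ∈ J, 0 ≤ ρ u + M * hker (a j - u) := fun j _ =>
      add_nonneg (hρpos u) (mul_nonneg hM0 (hker_nonneg _))
    by_cases hu : ρ u = 0
    · rw [hu, zero_mul, mul_zero, norm_zero]
      have := Finset.sum_nonneg hs0
      have := hρpos u
      simp only [F]
      positivity
    have hu1 := hρsupp u hu
    set z := x - ε • u with hzdef
    have hd := latDist_pos z hz
    have hg := g_bound g C₀ hexp z hz
    have hxz : ∀ i, |(x - z) i| ≤ ε := by
      intro i
      have : (x - z) i = ε * u i := by simp [hzdef]
      rw [this, abs_mul, abs_of_pos hε]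
      nlinarith [hu1 i]
    have htri : latDist x ≤ latDist z + 2 * ε :=
      (latDist_tri x z).trans (by linarith [enorm4_le (x - z) ε hε.le hxz])
    have hD2 : D ≤ 2 * latDist z ^ 2 + 9 * ε ^ 2 := by
      have := latDist_nonneg x
      nlinarith [sq_nonneg (latDist z - 2 * ε)]
    have hj0 : rdx z - rdx x ∈ J :=
      rdx_near x z fun i => lt_of_le_of_lt (hxz i) hε1
    have hnorm : ‖a (rdx z - rdx x) - u‖ = ε⁻¹ * ‖z - lpt (rdx z)‖ := by
      have : a (rdx z - rdx x) - u = ε⁻¹ • (z - lpt (rdx z)) := by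
        simp only [a, add_sub_cancel, hzdef]
        rw [sub_right_comm, smul_sub _ _ (ε • u), smul_smul, inv_mul_cancel₀ hε.ne', one_smul]
      rw [this, norm_smul, Real.norm_eq_abs, abs_of_pos (inv_pos.2 hε)]
    have hnpos : 0 < ‖z - lpt (rdx z)‖ := norm_pos_iff.2 (sub_ne_zero.2 (hz _))
    have hker1 : ρ u * (ε ^ 2 / latDist z ^ 2) ≤ ∑ j ∈ J, (ρ u + M * hker (a j - u)) := by
      refine le_trans ?_ (Finset.single_le_sum hs0 hj0)
      refine le_trans ?_ (inv_le_hker _ _ _ (hρpos u) (hM' u))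
      refine mul_le_mul_of_nonneg_left ?_ (hρpos u)
      rw [hnorm, mul_pow, mul_inv, inv_pow, inv_inv, div_eq_mul_inv]
      have := norm_le_latDist z
      gcongr
    have hgz : |g z| ≤ A / latDist z ^ 2 := by
      rw [le_div_iff₀ (by positivity), mul_comm]
      exact hg
    rw [norm_mul, norm_mul, Real.norm_eq_abs, Real.norm_eq_abs, Real.norm_eq_abs,
      abs_of_nonneg hD0, abs_of_nonneg (hρpos u)]
    calc D * (ρ u * |g z|)
        ≤ (2 * latDist z ^ 2 + 9 * ε ^ 2) * (ρ u * (A / latDist z ^ 2)) := by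
          have := hρpos u
          gcongr
      _ = A * (2 * ρ u + 9 * (ρ u * (ε ^ 2 / latDist z ^ 2))) := by
          field_simp
      _ ≤ F u := by
          simp only [F]
          gcongr
  have := norm_integral_le_of_norm_le hFi key
  rw [hFint, integral_const_mul, norm_mul, Real.norm_eq_abs, abs_of_nonneg hD0, mul_comm] at this
  exact this

end
end
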